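/- (Theorem: feasibility error of DUCA) Suppose the problem setup holds, each X_i is additionally compact, and the sequences (x^k)_{k≥1}, (y^k)_{k≥0}, (z^k)_{k≥0} are generated by DUCA. Then for every k ≥ 1, the Euclidean norm of the vector ( [Σ_{i=1}^N g_i(x̄_i^k)]_+ , Σ_{i=1}^N h_i(x̄_i^k) ) ∈ ℝ^{m+p} is at most (√(N·λ_1(P_A))/k)·(‖y^0 − y*‖_A + ‖s^0 − s*‖_G), where [w]_+ denotes the componentwise maximum of w with 0. -/

import Mathlib

open Matrix
open scoped Kronecker

abbrev Blk (m p : ℕ) := Sum (Fin m) (Fin p)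
abbrev Idx (N m p : ℕ) := Fin N × Blk m p

def projK {N m p : ℕ} (y : Idx N m p → ℝ) : Idx N m p → ℝ :=
  fun ij =>
    match ij with
    | (i, Sum.inl j) => max (y (i, Sum.inl j)) 0
    | (i, Sum.inr j) => y (i, Sum.inr j)

def projKpolar {N m p : ℕ} (y : Idx N m p → ℝ) : Idx N m p → ℝ :=
  fun ij =>
    match ij with
    | (i, Sum.inl j) => min (y (i, Sum.inl j)) 0
    | (_, Sum.inr _) => 0

def memK {N m p : ℕ} (y : Idx N m p → ℝ) : Prop :=
  ∀ (i : Fin N) (j : Fin m), 0 ≤ y (i, Sum.inl j)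

def IsMPInv {n : Type*} [Fintype n] [DecidableEq n] (M Md : Matrix n n ℝ) : Prop :=
  M * Md * M = M ∧ Md * M * Md = Md ∧ (M * Md)ᵀ = M * Md ∧ (Md * M)ᵀ = Md * M

def quadForm {n : Type*} [Fintype n] (M : Matrix n n ℝ) (w : n → ℝ) : ℝ :=
  w ⬝ᵥ (M *ᵥ w)


lemma dp_symm {n : Type*} [Fintype n] {M : Matrix n n ℝ} (hM : Mᵀ = M) (u v : n → ℝ) :
    u ⬝ᵥ (M *ᵥ v) = (M *ᵥ u) ⬝ᵥ v := by
  rw [Matrix.dotProduct_mulVec, ← Matrix.mulVec_transpose, hM]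

lemma psd_symm {n : Type*} [Fintype n] {M : Matrix n n ℝ} (hM : M.PosSemidef) : Mᵀ = M := by
  simpa [Matrix.IsHermitian, Matrix.conjTranspose_eq_transpose_of_trivial] using hM.1

lemma psd_nonneg {n : Type*} [Fintype n] {M : Matrix n n ℝ} (hM : M.PosSemidef) (u : n → ℝ) :
    0 ≤ u ⬝ᵥ (M *ᵥ u) := by
  simpa using hM.dotProduct_mulVec_nonneg u

lemma fejer {n : Type*} [Fintype n] [DecidableEq n] (A M H : Matrix n n ℝ) (hA : A.PosSemidef)
    (hM : Mᵀ = M) (hH : (H - M * M).PosSemidef) (ρ : ℝ) (hρ : 0 < ρ)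
    (y y' z z' ys zs : n → ℝ) (hMys : M *ᵥ ys = 0) (hHys : H *ᵥ ys = 0)
    (hz : z' = z + ρ • (M *ᵥ y'))
    (h : (y' - ys) ⬝ᵥ ((A + ρ • H) *ᵥ y' - A *ᵥ y + M *ᵥ z - M *ᵥ zs) ≤ 0) :
    quadForm A (y' - ys) + ((z' - zs) ⬝ᵥ (z' - zs)) / ρ
      ≤ quadForm A (y - ys) + ((z - zs) ⬝ᵥ (z - zs)) / ρ := by
  set e := y - ys with he
  set e' := y' - ys with he'
  set w := z - zs with hw
  have hMy : M *ᵥ y' = M *ᵥ e' := by rw [he', mulVec_sub, hMys, sub_zero]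
  have hHy : H *ᵥ y' = H *ᵥ e' := by rw [he', mulVec_sub, hHys, sub_zero]
  have hw' : z' - zs = w + ρ • (M *ᵥ e') := by rw [hz, hMy, hw]; abel
  have h1 : (A + ρ • H) *ᵥ y' - A *ᵥ y + M *ᵥ z - M *ᵥ zs
      = A *ᵥ e' - A *ᵥ e + ρ • (H *ᵥ e') + M *ᵥ w := by
    rw [add_mulVec, smul_mulVec, hHy, he, hw, he']
    simp only [mulVec_sub]; abel
  rw [h1] at h
  have h2 := psd_nonneg hH e'
  have h3 := psd_nonneg hA (e' - e)
  have hs := dp_symm (psd_symm hA) e e'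
  rw [dotProduct_comm] at hs
  rw [sub_mulVec, dotProduct_sub, ← mulVec_mulVec, dp_symm hM e' (M *ᵥ e')] at h2
  simp only [dotProduct_add, dotProduct_sub, dotProduct_smul, smul_eq_mul] at h
  rw [dp_symm hM e' w] at h
  simp only [mulVec_sub, dotProduct_sub, sub_dotProduct] at h3
  rw [hw']
  simp only [quadForm, dotProduct_add, add_dotProduct, dotProduct_smul, smul_dotProduct, smul_eq_mul]
  rw [dotProduct_comm w (M *ᵥ e')]
  have hs2 : e ⬝ᵥ (A *ᵥ e') = e' ⬝ᵥ (A *ᵥ e) := by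
    rw [dp_symm (psd_symm hA) e e', dotProduct_comm]
  set a := (M *ᵥ e') ⬝ᵥ w
  set b := (M *ᵥ e') ⬝ᵥ (M *ᵥ e')
  have : (w ⬝ᵥ w + ρ * a + ρ * (a + ρ * b)) / ρ = (w ⬝ᵥ w) / ρ + 2 * a + ρ * b := by
    field_simp; ring
  have h2' := mul_nonneg hρ.le h2
  have hb : 0 ≤ ρ * b := mul_nonneg hρ.le (by
    simp only [b, dotProduct]; exact Finset.sum_nonneg fun i _ => mul_self_nonneg _)
  rw [this]; nlinarith

lemma rayleigh {N : ℕ} (PA : Matrix (Fin N) (Fin N) ℝ) (hPA : PA.PosSemidef) (lam1 : ℝ)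
    (hmax : ∀ (μ : ℝ) (v : Fin N → ℝ), v ≠ 0 → PA *ᵥ v = μ • v → μ ≤ lam1) (v : Fin N → ℝ) :
    v ⬝ᵥ (PA *ᵥ v) ≤ lam1 * (v ⬝ᵥ v) := by
  have hH : (lam1 • (1 : Matrix (Fin N) (Fin N) ℝ) - PA).IsHermitian := by
    have := psd_symm hPA
    simp [Matrix.IsHermitian, Matrix.conjTranspose_eq_transpose_of_trivial, this]
  have hP : (lam1 • (1 : Matrix (Fin N) (Fin N) ℝ) - PA).PosSemidef := by
    rw [hH.posSemidef_iff_eigenvalues_nonneg]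
    intro i
    have h1 := hH.mulVec_eigenvectorBasis i
    have hne : (hH.eigenvectorBasis i).ofLp ≠ 0 := by
      intro h0
      have := hH.eigenvectorBasis.orthonormal.ne_zero i
      apply this
      ext j; simpa using congrFun h0 j
    have := hmax (lam1 - hH.eigenvalues i) _ hne (by
      rw [sub_mulVec, smul_mulVec, one_mulVec] at h1
      rw [sub_smul, ← h1]; simp)
    simp only [Pi.zero_apply]; linarith
  have := psd_nonneg hP v
  rw [sub_mulVec, smul_mulVec, one_mulVec, dotProduct_sub, dotProduct_smul, smul_eq_mul] at this
  linarith

lemma cs_psd {n : Type*} [Fintype n] {M : Matrix n n ℝ} (hM : M.PosSemidef) (u v : n → ℝ) :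
    (u ⬝ᵥ (M *ᵥ v)) ^ 2 ≤ (u ⬝ᵥ (M *ᵥ u)) * (v ⬝ᵥ (M *ᵥ v)) := by
  have hs2 : v ⬝ᵥ (M *ᵥ u) = u ⬝ᵥ (M *ᵥ v) := by
    rw [dp_symm (psd_symm hM) v u, dotProduct_comm]
  have h : ∀ t : ℝ, 0 ≤ (u ⬝ᵥ (M *ᵥ u)) * (t * t) + (2 * (u ⬝ᵥ (M *ᵥ v))) * t + v ⬝ᵥ (M *ᵥ v) := by
    intro t
    have := psd_nonneg hM (t • u + v)
    simp only [mulVec_add, mulVec_smul, dotProduct_add, add_dotProduct, dotProduct_smul,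
      smul_dotProduct, smul_eq_mul, hs2] at this
    linarith
  have := discrim_le_zero h
  rw [discrim] at this
  nlinarith

lemma sqrt_tri {n : Type*} [Fintype n] {M : Matrix n n ℝ} (hM : M.PosSemidef) (u v : n → ℝ) :
    √(quadForm M (u - v)) ≤ √(quadForm M v) + √(quadForm M u) := by
  have hs2 : v ⬝ᵥ (M *ᵥ u) = u ⬝ᵥ (M *ᵥ v) := by
    rw [dp_symm (psd_symm hM) v u, dotProduct_comm]
  have hu := psd_nonneg hM u
  have hv := psd_nonneg hM v
  apply Real.sqrt_le_iff.2 ⟨by positivity, ?_⟩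
  have hc := cs_psd hM u v
  have : |u ⬝ᵥ (M *ᵥ v)| ≤ √(quadForm M u) * √(quadForm M v) := by
    rw [← Real.sqrt_mul (by exact hu)]
    exact Real.abs_le_sqrt hc
  have h1 := (abs_le.1 this).1
  have e1 := Real.sq_sqrt (show 0 ≤ quadForm M u from hu)
  have e2 := Real.sq_sqrt (show 0 ≤ quadForm M v from hv)
  have e3 : quadForm M (u - v) = quadForm M u - 2 * (u ⬝ᵥ (M *ᵥ v)) + quadForm M v := by
    simp only [quadForm, mulVec_sub, dotProduct_sub, sub_dotProduct, hs2]; ring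
  nlinarith

lemma small_t (a C : ℝ) (h : ∀ t : ℝ, 0 < t → t ≤ 1 → 0 ≤ t * a + t ^ 2 * C) : 0 ≤ a := by
  by_contra hn
  push Not at hn
  have hC : 0 ≤ |C| := abs_nonneg C
  have hC2 := le_abs_self C
  have ht : 0 < min 1 (-a / (2 * (|C| + 1))) := lt_min one_pos (by apply div_pos <;> linarith)
  have := h _ ht (min_le_left _ _)
  have h2 := min_le_right 1 (-a / (2 * (|C| + 1)))
  set t := min 1 (-a / (2 * (|C| + 1)))
  rw [le_div_iff₀ (by linarith)] at h2
  have h3 : 0 ≤ a + t * C := by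
    have : 0 ≤ t * (a + t * C) := by linarith
    exact nonneg_of_mul_nonneg_right this ht
  nlinarith

lemma projK_sq_le {N m p : ℕ} (u v δ : Idx N m p → ℝ)
    (h1 : ∀ i j, v (i, Sum.inl j) ≤ u (i, Sum.inl j) + δ (i, Sum.inl j))
    (h2 : ∀ i j, v (i, Sum.inr j) = u (i, Sum.inr j) + δ (i, Sum.inr j)) (ij : Idx N m p) :
    projK v ij ^ 2 ≤ projK u ij ^ 2 + 2 * (projK u ij * δ ij) + δ ij ^ 2 := by
  obtain ⟨i, j | j⟩ := ij
  · simp only [projK]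
    have := h1 i j
    have a1 := le_max_right (u (i, Sum.inl j)) 0
    have a2 := le_max_left (u (i, Sum.inl j)) 0
    rcases max_cases (v (i, Sum.inl j)) 0 with ⟨h, _⟩ | ⟨h, _⟩ <;> rw [h]
    · nlinarith
    · nlinarith [sq_nonneg (max (u (i, Sum.inl j)) 0 + δ (i, Sum.inl j))]
  · simp only [projK, h2]
    nlinarith

lemma kron_apply {N m p : ℕ} (P : Matrix (Fin N) (Fin N) ℝ) (w : Idx N m p → ℝ) (i : Fin N)
    (j : Blk m p) :
    ((P ⊗ₖ (1 : Matrix (Blk m p) (Blk m p) ℝ)) *ᵥ w) (i, j) = (P *ᵥ fun i' => w (i', j)) i := by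
  simp only [mulVec, dotProduct, Fintype.sum_prod_type, kronecker_apply]
  refine Finset.sum_congr rfl fun i' _ => ?_
  simp only [Matrix.one_apply, mul_ite, ite_mul, mul_one, mul_zero, zero_mul,
    Finset.sum_ite_eq, Finset.mem_univ, if_true]

lemma kron_quad {N m p : ℕ} (P : Matrix (Fin N) (Fin N) ℝ) (w : Idx N m p → ℝ) :
    quadForm (P ⊗ₖ (1 : Matrix (Blk m p) (Blk m p) ℝ)) w
      = ∑ j : Blk m p, (fun i => w (i, j)) ⬝ᵥ (P *ᵥ fun i => w (i, j)) := by
  simp only [quadForm]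
  rw [dotProduct, Fintype.sum_prod_type, Finset.sum_comm]
  refine Finset.sum_congr rfl fun j _ => ?_
  simp only [kron_apply, dotProduct]

lemma kron_psd {N m p : ℕ} {P : Matrix (Fin N) (Fin N) ℝ} (hP : P.PosSemidef) :
    (P ⊗ₖ (1 : Matrix (Blk m p) (Blk m p) ℝ)).PosSemidef :=
  hP.kronecker Matrix.PosSemidef.one

lemma mulVec_eq_zero_of_sq {n : Type*} [Fintype n] {M : Matrix n n ℝ} (hM : Mᵀ = M) (u : n → ℝ)
    (h : (M * M) *ᵥ u = 0) : M *ᵥ u = 0 := by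
  have : (M *ᵥ u) ⬝ᵥ (M *ᵥ u) = 0 := by
    rw [← dp_symm hM, mulVec_mulVec, h, dotProduct_zero]
  exact dotProduct_self_eq_zero.1 this

/-- first-order optimality of the primal step, tested at `w` -/
lemma opt_cond {N m p : ℕ} {E : Type*} [AddCommGroup E] [Module ℝ E]
    (S : Set E) (hS : Convex ℝ S) (F : E → ℝ) (hF : ConvexOn ℝ Set.univ F)
    (tg : E → Idx N m p → ℝ)
    (h1 : ∀ i j, ConvexOn ℝ Set.univ (fun x => tg x (i, Sum.inl j)))
    (h2 : ∀ (a b : E) (t : ℝ) i j, tg ((1 - t) • a + t • b) (i, Sum.inr j)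
      = (1 - t) * tg a (i, Sum.inr j) + t * tg b (i, Sum.inr j))
    (q : Idx N m p → ℝ) (di : Idx N m p → ℝ) (hdi : ∀ ij, 0 ≤ di ij)
    (x0 : E) (hx0 : x0 ∈ S)
    (hmin : ∀ w ∈ S, F x0 + (1 / 2) * ∑ ij, di ij * projK (q + tg x0) ij ^ 2
      ≤ F w + (1 / 2) * ∑ ij, di ij * projK (q + tg w) ij ^ 2)
    (w : E) (hw : w ∈ S) :
    F x0 + ∑ ij, (di ij * projK (q + tg x0) ij) * tg x0 ij
      ≤ F w + ∑ ij, (di ij * projK (q + tg x0) ij) * tg w ij := by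
  set δ : Idx N m p → ℝ := tg w - tg x0 with hδ
  have key : 0 ≤ (F w - F x0) + ∑ ij, (di ij * projK (q + tg x0) ij) * δ ij := by
    apply small_t _ ((1 / 2) * ∑ ij, di ij * δ ij ^ 2)
    intro t ht0 ht1
    have hm := hmin ((1 - t) • x0 + t • w)
      (hS hx0 hw (by linarith) ht0.le (by ring))
    have hFt := hF.2 (Set.mem_univ x0) (Set.mem_univ w) (show 0 ≤ 1 - t by linarith) ht0.le (by ring)
    simp only [smul_eq_mul] at hFt
    have hp := projK_sq_le (q + tg x0) (q + tg ((1 - t) • x0 + t • w)) (t • δ)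
      (by
        intro i j
        have := (h1 i j).2 (Set.mem_univ x0) (Set.mem_univ w) (show 0 ≤ 1 - t by linarith) ht0.le
          (by ring)
        simp only [smul_eq_mul] at this
        simp only [Pi.add_apply, Pi.smul_apply, smul_eq_mul, hδ, Pi.sub_apply]
        linarith)
      (by
        intro i j
        simp only [Pi.add_apply, Pi.smul_apply, smul_eq_mul, hδ, Pi.sub_apply, h2]
        ring)
    have hs : ∑ ij, di ij * projK (q + tg ((1 - t) • x0 + t • w)) ij ^ 2
        ≤ ∑ ij, di ij * projK (q + tg x0) ij ^ 2
          + 2 * t * (∑ ij, (di ij * projK (q + tg x0) ij) * δ ij)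
          + t ^ 2 * ∑ ij, di ij * δ ij ^ 2 := by
      rw [Finset.mul_sum, Finset.mul_sum, ← Finset.sum_add_distrib, ← Finset.sum_add_distrib]
      refine Finset.sum_le_sum fun ij _ => ?_
      have := mul_le_mul_of_nonneg_left (hp ij) (hdi ij)
      simp only [Pi.smul_apply, smul_eq_mul] at this
      linarith
    linarith
  have : ∑ ij, (di ij * projK (q + tg x0) ij) * δ ij
      = ∑ ij, (di ij * projK (q + tg x0) ij) * tg w ij
        - ∑ ij, (di ij * projK (q + tg x0) ij) * tg x0 ij := by
    rw [← Finset.sum_sub_distrib]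
    refine Finset.sum_congr rfl fun ij _ => ?_
    simp only [hδ, Pi.sub_apply]; ring
  linarith

theorem stmt0
    (N m p : ℕ) (hN : 1 ≤ N) (hm : 1 ≤ m) (hp : 1 ≤ p)
    (d : Fin N → ℕ)
    (X : ∀ i : Fin N, Set (Fin (d i) → ℝ))
    (hXne : ∀ i, (X i).Nonempty) (hXcl : ∀ i, IsClosed (X i))
    (hXcv : ∀ i, Convex ℝ (X i))
    (f : ∀ i : Fin N, (Fin (d i) → ℝ) → ℝ)
    (hf : ∀ i, ConvexOn ℝ Set.univ (f i))
    (g : ∀ i : Fin N, (Fin (d i) → ℝ) → Fin m → ℝ)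
    (hg : ∀ i j, ConvexOn ℝ Set.univ (fun xi => g i xi j))
    (B : ∀ i : Fin N, Matrix (Fin p) (Fin (d i)) ℝ) (c : ∀ i : Fin N, Fin p → ℝ)
    (F : (∀ i, Fin (d i) → ℝ) → ℝ) (hF : ∀ x, F x = ∑ i, f i (x i))
    (tg : (∀ i, Fin (d i) → ℝ) → Idx N m p → ℝ)
    (htg1 : ∀ x (i : Fin N) (j : Fin m), tg x (i, Sum.inl j) = g i (x i) j)
    (htg2 : ∀ x (i : Fin N) (j : Fin p), tg x (i, Sum.inr j) = (B i *ᵥ x i + c i) j)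
    (ρ : ℝ) (hρ : 0 < ρ)
    (PA PH PHt : Matrix (Fin N) (Fin N) ℝ)
    (hPA : PA.PosSemidef) (hPH : PH.PosSemidef) (hPHt : PHt.PosSemidef)
    (hDdiag : (PA + ρ • PH).IsDiag) (hDpd : (PA + ρ • PH).PosDef)
    (hHHt : (PH - PHt).PosSemidef)
    (hPHnull : ∀ v : Fin N → ℝ, PH *ᵥ v = 0 ↔ ∃ t : ℝ, v = fun _ => t)
    (hPHtnull : ∀ v : Fin N → ℝ, PHt *ᵥ v = 0 ↔ ∃ t : ℝ, v = fun _ => t)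
    (A Htld D : Matrix (Idx N m p) (Idx N m p) ℝ)
    (hA : A = PA ⊗ₖ (1 : Matrix (Blk m p) (Blk m p) ℝ))
    (hHtld : Htld = PHt ⊗ₖ (1 : Matrix (Blk m p) (Blk m p) ℝ))
    (hD : D = A + ρ • (PH ⊗ₖ (1 : Matrix (Blk m p) (Blk m p) ℝ)))
    (Hhalf : Matrix (Idx N m p) (Idx N m p) ℝ)
    (hHhalfpsd : Hhalf.PosSemidef) (hHhalfsq : Hhalf * Hhalf = Htld)
    (hXcp : ∀ i, IsCompact (X i))
    (Hhalfdag : Matrix (Idx N m p) (Idx N m p) ℝ) (hHhalfdag : IsMPInv Hhalf Hhalfdag)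
    (lam1 : ℝ)
    (hlam1ev : ∃ v : Fin N → ℝ, v ≠ 0 ∧ PA *ᵥ v = lam1 • v)
    (hlam1max : ∀ (μ : ℝ) (v : Fin N → ℝ), v ≠ 0 → PA *ᵥ v = μ • v → μ ≤ lam1)
    (x : ℕ → ∀ i, Fin (d i) → ℝ) (y z : ℕ → Idx N m p → ℝ)
    (hxX : ∀ k, ∀ i, x (k + 1) i ∈ X i)
    (hy0 : memK (y 0))
    (hyupd : ∀ k, y (k + 1) = projK (D⁻¹ *ᵥ ((A *ᵥ y k) - (Hhalf *ᵥ z k) + tg (x (k + 1)))))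
    (hzupd : ∀ k, z (k + 1) = z k + ρ • (Hhalf *ᵥ y (k + 1)))
    (hxmin : ∀ k, ∀ w, (∀ i, w i ∈ X i) →
      F (x (k + 1))
          + (1 / 2) * quadForm D⁻¹ (projK ((A *ᵥ y k) - (Hhalf *ᵥ z k) + tg (x (k + 1))))
        ≤ F w + (1 / 2) * quadForm D⁻¹ (projK ((A *ᵥ y k) - (Hhalf *ᵥ z k) + tg w)))
    (xs : ∀ i, Fin (d i) → ℝ) (hxsX : ∀ i, xs i ∈ X i)
    (hxsg : ∀ j, (∑ i, g i (xs i) j) ≤ 0)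
    (hxsh : ∀ j, (∑ i, (B i *ᵥ xs i + c i) j) = 0)
    (mus : Fin m → ℝ) (hmus : ∀ j, 0 ≤ mus j) (lams : Fin p → ℝ)
    (hcs : (∑ j, mus j * ∑ i, g i (xs i) j) = 0)
    (hsaddle : ∀ w, (∀ i, w i ∈ X i) →
      F xs + (∑ j, mus j * ∑ i, g i (xs i) j) + (∑ j, lams j * ∑ i, (B i *ᵥ xs i + c i) j)
        ≤ F w + (∑ j, mus j * ∑ i, g i (w i) j) + (∑ j, lams j * ∑ i, (B i *ᵥ w i + c i) j))
    (ys : Idx N m p → ℝ) (hys : ∀ (i : Fin N) (j : Blk m p), ys (i, j) = Sum.elim mus lams j)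
    (zstar vstar : Idx N m p → ℝ)
    (hzstar : zstar = Hhalfdag *ᵥ tg xs)
    (hvstar : vstar = Hhalf *ᵥ zstar)
    (xbar : ℕ → ∀ i, Fin (d i) → ℝ)
    (hxbar : ∀ k (i : Fin N) (j : Fin (d i)),
      xbar k i j = (∑ l ∈ Finset.Icc 1 k, x l i j) / (k : ℝ))
    :
    ∀ k : ℕ, 1 ≤ k →
      Real.sqrt ((∑ j : Fin m, (max (∑ i, g i (xbar k i) j) 0) ^ 2)
          + ∑ j : Fin p, (∑ i, (B i *ᵥ xbar k i + c i) j) ^ 2)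
        ≤ Real.sqrt ((N : ℝ) * lam1) / (k : ℝ) *
          (Real.sqrt (quadForm A (y 0 - ys))
            + Real.sqrt (quadForm A (y 0 - ys) + ((z 0 - zstar) ⬝ᵥ (z 0 - zstar)) / ρ)) := by
  classical
  -- the diagonal of D
  set dg : Fin N → ℝ := fun i => (PA + ρ • PH) i i with hdg
  have hdpos : ∀ i, 0 < dg i := fun i => hDpd.diag_pos
  have hDk : D = (PA + ρ • PH) ⊗ₖ (1 : Matrix (Blk m p) (Blk m p) ℝ) := by
    rw [hD, hA, add_kronecker, smul_kronecker]
  have hDd : D = diagonal (fun ij : Idx N m p => dg ij.1) := by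
    rw [hDk]
    ext ⟨i, j⟩ ⟨i', j'⟩
    rw [kronecker_apply, diagonal_apply]
    by_cases hi : i = i'
    · subst hi
      by_cases hj : j = j'
      · subst hj; simp [hdg]
      · simp [hj]
    · rw [hDdiag hi]; simp [hi]
  have hDinv : D⁻¹ = diagonal (fun ij : Idx N m p => (dg ij.1)⁻¹) := by
    apply Matrix.inv_eq_right_inv
    rw [hDd, diagonal_mul_diagonal, ← diagonal_one]
    congr 1; ext ij; exact mul_inv_cancel₀ (hdpos _).ne'
  have hDiv : ∀ u ij, (D⁻¹ *ᵥ u) ij = (dg ij.1)⁻¹ * u ij := by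
    intro u ij; rw [hDinv, mulVec_diagonal]
  have hDv : ∀ u ij, (D *ᵥ u) ij = dg ij.1 * u ij := by
    intro u ij; rw [hDd, mulVec_diagonal]
  have hApsd : A.PosSemidef := hA ▸ kron_psd hPA
  have hMs : Hhalfᵀ = Hhalf := psd_symm hHhalfpsd
  set H : Matrix (Idx N m p) (Idx N m p) ℝ := PH ⊗ₖ (1 : Matrix (Blk m p) (Blk m p) ℝ) with hH
  have hHd : (H - Hhalf * Hhalf).PosSemidef := by
    have : H - Hhalf * Hhalf = (PH - PHt) ⊗ₖ (1 : Matrix (Blk m p) (Blk m p) ℝ) := by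
      rw [hHhalfsq, hHtld, hH, sub_eq_iff_eq_add, ← add_kronecker, sub_add_cancel]
    rw [this]; exact kron_psd hHHt
  -- block-constant vectors are in the null spaces
  have hHconst : ∀ b : Blk m p → ℝ, H *ᵥ (fun ij => b ij.2) = 0 := by
    intro b; ext ⟨i, j⟩
    rw [hH, kron_apply, (hPHnull _).2 ⟨b j, rfl⟩]; rfl
  have hMconst : ∀ b : Blk m p → ℝ, Hhalf *ᵥ (fun ij => b ij.2) = 0 := by
    intro b
    apply mulVec_eq_zero_of_sq hMs
    ext ⟨i, j⟩
    rw [hHhalfsq, hHtld, kron_apply, (hPHtnull _).2 ⟨b j, rfl⟩]; rfl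
  have hyse : ys = fun ij => Sum.elim mus lams ij.2 := by ext ⟨i, j⟩; exact hys i j
  -- column sums of range vectors vanish
  have hsum_dot : ∀ (u : Idx N m p → ℝ) (j : Blk m p),
      (∑ i, u (i, j)) = (fun ij : Idx N m p => (Pi.single j 1 : Blk m p → ℝ) ij.2) ⬝ᵥ u := by
    intro u j
    simp only [dotProduct, Fintype.sum_prod_type, Pi.single_apply, ite_mul, one_mul, zero_mul,
      Finset.sum_ite_eq', Finset.mem_univ, if_true]
  have hMsum : ∀ (u : Idx N m p → ℝ) (j : Blk m p), ∑ i, (Hhalf *ᵥ u) (i, j) = 0 := by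
    intro u j; rw [hsum_dot, dp_symm hMs, hMconst, zero_dotProduct]
  have hHsum : ∀ (u : Idx N m p → ℝ) (j : Blk m p), ∑ i, (H *ᵥ u) (i, j) = 0 := by
    intro u j; rw [hsum_dot, dp_symm (psd_symm (kron_psd hPH)), hHconst, zero_dotProduct]
  -- the argument of the projection
  set q : ℕ → Idx N m p → ℝ := fun k => A *ᵥ y k - Hhalf *ᵥ z k with hq
  have hyK : ∀ k ij, y (k + 1) ij = (dg ij.1)⁻¹ * projK (q k + tg (x (k + 1))) ij := by
    rintro k ⟨i, j | j⟩
    · rw [hyupd]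
      simp only [projK]
      rw [hDiv, mul_max_of_nonneg _ _ (inv_nonneg.2 (hdpos i).le), mul_zero]
    · rw [hyupd]
      simp only [projK]
      rw [hDiv]
  set σ : ℕ → Idx N m p → ℝ := fun k => D *ᵥ y (k + 1) - (q k + tg (x (k + 1))) with hσ
  have hDy : ∀ k ij, (D *ᵥ y (k + 1)) ij = projK (q k + tg (x (k + 1))) ij := by
    intro k ij
    rw [hDv, hyK, mul_inv_cancel_left₀ (hdpos _).ne']
  have hσ1 : ∀ k i j, 0 ≤ σ k (i, Sum.inl j) := by
    intro k i j
    simp only [hσ, Pi.sub_apply]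
    rw [hDy]; simp only [projK]
    exact sub_nonneg.2 (le_max_left _ _)
  have hσ2 : ∀ k i j, σ k (i, Sum.inr j) = 0 := by
    intro k i j
    simp only [hσ, Pi.sub_apply]
    rw [hDy]; simp only [projK]
    exact sub_self _
  have hyσ : ∀ k ij, y (k + 1) ij * σ k ij = 0 := by
    rintro k ⟨i, j | j⟩
    · simp only [hσ, Pi.sub_apply]
      rw [hDy, hyK]; simp only [projK]
      rcases max_cases ((q k + tg (x (k + 1))) (i, Sum.inl j)) 0 with ⟨h, _⟩ | ⟨h, _⟩ <;> rw [h]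
      · simp
      · simp
    · rw [hσ2, mul_zero]
  have hyn : ∀ k i j, 0 ≤ y (k + 1) (i, Sum.inl j) := by
    intro k i j
    rw [hyK]; simp only [projK]
    exact mul_nonneg (inv_nonneg.2 (hdpos i).le) (le_max_right _ _)
  -- optimality
  have hquad : ∀ u, quadForm D⁻¹ u = ∑ ij, (dg ij.1)⁻¹ * u ij ^ 2 := by
    intro u; simp only [quadForm, dotProduct, hDiv]
    refine Finset.sum_congr rfl fun ij _ => by ring
  have hopt : ∀ k, F (x (k + 1)) + y (k + 1) ⬝ᵥ tg (x (k + 1)) ≤ F xs + y (k + 1) ⬝ᵥ tg xs := by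
    intro k
    have hFc : ConvexOn ℝ Set.univ F := by
      refine ⟨convex_univ, fun a _ b _ s t hs ht hst => ?_⟩
      rw [hF, hF, hF, Finset.smul_sum, Finset.smul_sum, ← Finset.sum_add_distrib]
      exact Finset.sum_le_sum fun i _ => (hf i).2 (Set.mem_univ _) (Set.mem_univ _) hs ht hst
    have := opt_cond (Set.pi Set.univ X) (convex_pi fun i _ => hXcv i) F hFc tg
      (by
        intro i j
        refine ⟨convex_univ, fun a _ b _ s t hs ht hst => ?_⟩
        simp only [htg1]
        exact (hg i j).2 (Set.mem_univ _) (Set.mem_univ _) hs ht hst)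
      (by
        intro a b t i j
        simp only [htg2, Pi.add_apply, Pi.smul_apply, mulVec_add, mulVec_smul, smul_eq_mul]
        ring)
      (q k) (fun ij => (dg ij.1)⁻¹) (fun ij => inv_nonneg.2 (hdpos _).le)
      (x (k + 1)) (fun i _ => hxX k i)
      (by
        intro w hw
        have := hxmin k w (fun i => hw i (Set.mem_univ i))
        rw [hquad, hquad] at this
        exact this)
      xs (fun i _ => hxsX i)
    simp only [← hyK] at this
    exact this
  -- saddle inequality in stacked form
  have hstack : ∀ w, ys ⬝ᵥ tg w
      = (∑ j, mus j * ∑ i, g i (w i) j) + (∑ j, lams j * ∑ i, (B i *ᵥ w i + c i) j) := by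
    intro w
    rw [hyse, dotProduct, Fintype.sum_prod_type, Finset.sum_comm, Fintype.sum_sum_type]
    simp only [Sum.elim_inl, Sum.elim_inr, htg1, htg2, Finset.mul_sum]
  have hsad : ∀ k, F xs + ys ⬝ᵥ tg xs ≤ F (x (k + 1)) + ys ⬝ᵥ tg (x (k + 1)) := by
    intro k
    rw [hstack, hstack, ← add_assoc, ← add_assoc]
    exact hsaddle _ (hxX k)
  -- the residual r = tg xs - v*
  set r : Idx N m p → ℝ := tg xs - Hhalf *ᵥ zstar with hr
  have hMr : Hhalf *ᵥ r = 0 := by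
    have h3 : Hhalf * (Hhalf * Hhalfdag) = Hhalf := by
      have := congrArg Matrix.transpose hHhalfdag.1
      rw [transpose_mul, hHhalfdag.2.2.1, hMs] at this
      exact this
    rw [hr, hzstar, mulVec_sub, mulVec_mulVec, mulVec_mulVec, Matrix.mul_assoc, h3, sub_self]
  have hrc : ∀ j, ∃ t, ∀ i, r (i, j) = t := by
    intro j
    have : PHt *ᵥ (fun i => r (i, j)) = 0 := by
      ext i
      rw [← kron_apply, ← hHtld, ← hHhalfsq, ← mulVec_mulVec, hMr, mulVec_zero]; rfl
    obtain ⟨t, ht⟩ := (hPHtnull _).1 this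
    exact ⟨t, fun i => congrFun ht i⟩
  choose rb hrb using hrc
  have hNpos : (0 : ℝ) < N := by exact_mod_cast hN
  have hrsum : ∀ j, (N : ℝ) * rb j = ∑ i, tg xs (i, j) := by
    intro j
    have : ∑ i, r (i, j) = ∑ i, tg xs (i, j) := by
      simp only [hr, Pi.sub_apply]
      rw [Finset.sum_sub_distrib, hMsum, sub_zero]
    rw [← this]; simp [hrb]
  have hrb1 : ∀ j, rb (Sum.inl j) ≤ 0 := by
    intro j
    have h1 := hrsum (Sum.inl j)
    simp only [htg1] at h1
    have h2 := hxsg j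
    rw [← h1] at h2
    nlinarith
  have hrb2 : ∀ j, rb (Sum.inr j) = 0 := by
    intro j
    have h1 := hrsum (Sum.inr j)
    simp only [htg2] at h1
    rw [hxsh j] at h1
    exact (mul_eq_zero.1 h1).resolve_left hNpos.ne'
  have hyr : ∀ k, y (k + 1) ⬝ᵥ r ≤ 0 := by
    intro k
    refine Finset.sum_nonpos ?_
    rintro ⟨i, j | j⟩ _
    · rw [hrb]; exact mul_nonpos_of_nonneg_of_nonpos (hyn k i j) (hrb1 j)
    · rw [hrb, hrb2, mul_zero]
  have hysr : ys ⬝ᵥ r = 0 := by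
    have h1 : ys ⬝ᵥ tg xs = 0 := by
      rw [hstack, hcs]; simp only [hxsh, mul_zero, Finset.sum_const_zero, add_zero]
    rw [hr, dotProduct_sub, h1, dp_symm hMs, hyse, hMconst, zero_dotProduct, sub_zero]
  have hysσ : ∀ k, 0 ≤ ys ⬝ᵥ σ k := by
    intro k
    refine Finset.sum_nonneg ?_
    rintro ⟨i, j | j⟩ _
    · rw [hys]; exact mul_nonneg (hmus j) (hσ1 k i j)
    · rw [hσ2, mul_zero]
  have hyσ' : ∀ k, y (k + 1) ⬝ᵥ σ k = 0 := fun k => Finset.sum_eq_zero fun ij _ => hyσ k ij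
  -- Fejer monotonicity
  have hstep : ∀ k, quadForm A (y (k + 1) - ys) + ((z (k + 1) - zstar) ⬝ᵥ (z (k + 1) - zstar)) / ρ
      ≤ quadForm A (y k - ys) + ((z k - zstar) ⬝ᵥ (z k - zstar)) / ρ := by
    intro k
    refine fejer A Hhalf H hApsd hMs hHd ρ hρ _ _ _ _ _ _ (by rw [hyse]; exact hMconst _)
      (by rw [hyse]; exact hHconst _) (hzupd k) ?_
    have e1 : (A + ρ • H) *ᵥ y (k + 1) - A *ᵥ y k + Hhalf *ᵥ z k - Hhalf *ᵥ zstar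
        = (tg (x (k + 1)) - tg xs) + σ k + r := by
      rw [← hD]; simp only [hσ, hq, hr]; abel
    rw [e1]
    simp only [sub_dotProduct, dotProduct_add, dotProduct_sub]
    linarith [hopt k, hsad k, hyr k, hysσ k, hyσ' k, hysr]
  have hfej : ∀ k, quadForm A (y k - ys) + ((z k - zstar) ⬝ᵥ (z k - zstar)) / ρ
      ≤ quadForm A (y 0 - ys) + ((z 0 - zstar) ⬝ᵥ (z 0 - zstar)) / ρ := by
    intro k
    induction k with
    | zero => exact le_rfl
    | succ k ih => exact (hstep k).trans ih
  -- telescoped feasibility identity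
  have hone : ∀ k j, ∑ i, tg (x (k + 1)) (i, j) + ∑ i, σ k (i, j)
      = ∑ i, (A *ᵥ (y (k + 1))) (i, j) - ∑ i, (A *ᵥ (y k)) (i, j) := by
    intro k j
    have e : ∀ i, tg (x (k + 1)) (i, j) + σ k (i, j) = (A *ᵥ y (k + 1)) (i, j)
        + ρ * (H *ᵥ y (k + 1)) (i, j) - (A *ᵥ y k) (i, j) + (Hhalf *ᵥ z k) (i, j) := by
      intro i
      simp only [hσ, hq, hD, add_mulVec, smul_mulVec, Pi.add_apply, Pi.sub_apply, Pi.smul_apply,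
        smul_eq_mul]
      ring
    rw [← Finset.sum_add_distrib, Finset.sum_congr rfl fun i _ => e i]
    rw [Finset.sum_add_distrib, Finset.sum_sub_distrib, Finset.sum_add_distrib, ← Finset.mul_sum,
      hHsum, hMsum]
    ring
  have htel : ∀ k j, ∑ l ∈ Finset.Icc 1 k, ∑ i, tg (x l) (i, j)
      + ∑ l ∈ Finset.range k, ∑ i, σ l (i, j)
      = ∑ i, (A *ᵥ (y k - y 0)) (i, j) := by
    intro k j
    simp only [mulVec_sub, Pi.sub_apply]
    rw [Finset.sum_sub_distrib]
    induction k with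
    | zero => simp
    | succ k ih =>
      rw [Finset.sum_Icc_succ_top (by omega), Finset.sum_range_succ]
      linarith [hone k j]
  intro k hk
  have hkpos : (0 : ℝ) < k := by exact_mod_cast hk
  set T : Blk m p → ℝ := fun j => ∑ i, (A *ᵥ (y k - y 0)) (i, j) with hT
  have hxb : ∀ i, xbar k i = ∑ l ∈ Finset.Icc 1 k, (1 / (k : ℝ)) • x l i := by
    intro i; ext j
    rw [hxbar, Finset.sum_apply, Finset.sum_div]
    refine Finset.sum_congr rfl fun l _ => ?_
    simp only [Pi.smul_apply, smul_eq_mul]; ring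
  have hw1 : ∑ l ∈ Finset.Icc 1 k, (1 / (k : ℝ)) = 1 := by
    simp; exact mul_inv_cancel₀ hkpos.ne'
  have hgb : ∀ j, k * (∑ i, g i (xbar k i) j) ≤ T (Sum.inl j) := by
    intro j
    have h1 : ∀ i, k * g i (xbar k i) j ≤ ∑ l ∈ Finset.Icc 1 k, g i (x l i) j := by
      intro i
      have := (hg i j).map_sum_le (t := Finset.Icc 1 k) (w := fun _ => 1 / (k : ℝ))
        (p := fun l => x l i) (fun _ _ => by positivity) hw1 (fun _ _ => Set.mem_univ _)
      rw [← hxb] at this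
      simp only [smul_eq_mul] at this
      rw [← Finset.mul_sum, one_div, inv_mul_eq_div, le_div_iff₀ hkpos] at this
      linarith
    have h2 := htel k (Sum.inl j)
    have h3 : 0 ≤ ∑ l ∈ Finset.range k, ∑ i, σ l (i, Sum.inl j) :=
      Finset.sum_nonneg fun l _ => Finset.sum_nonneg fun i _ => hσ1 l i j
    simp only [htg1] at h2
    rw [Finset.sum_comm] at h2
    rw [Finset.mul_sum]
    have h4 := Finset.sum_le_sum fun i (_ : i ∈ Finset.univ) => h1 i
    simp only [hT]
    linarith
  have hhb : ∀ j, k * (∑ i, (B i *ᵥ xbar k i + c i) j) = T (Sum.inr j) := by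
    intro j
    have h1 : ∀ i, k * (B i *ᵥ xbar k i + c i) j
        = ∑ l ∈ Finset.Icc 1 k, (B i *ᵥ x l i + c i) j := by
      intro i
      rw [hxb, ← Finset.smul_sum, mulVec_smul, Matrix.mulVec_sum]
      simp only [Pi.add_apply, Pi.smul_apply, Finset.sum_apply, smul_eq_mul,
        Finset.sum_add_distrib, Finset.sum_const, Nat.card_Icc, nsmul_eq_mul, mul_add]
      rw [← mul_assoc, mul_one_div_cancel hkpos.ne']
      simp
    have h2 := htel k (Sum.inr j)
    simp only [hσ2, Finset.sum_const_zero, add_zero, htg2] at h2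
    rw [Finset.sum_comm] at h2
    rw [Finset.mul_sum, Finset.sum_congr rfl fun i _ => h1 i]
    exact h2
  -- bound on T
  have hray : (fun _ : Fin N => (1 : ℝ)) ⬝ᵥ (PA *ᵥ fun _ => 1) ≤ N * lam1 := by
    have := rayleigh PA hPA lam1 hlam1max (fun _ => 1)
    have e : (fun _ : Fin N => (1 : ℝ)) ⬝ᵥ (fun _ => 1) = N := by simp [dotProduct]
    rw [e] at this; linarith
  have hNl : 0 ≤ (N : ℝ) * lam1 := (psd_nonneg hPA _).trans hray
  have hTb : ∑ j, T j ^ 2 ≤ (N * lam1) * quadForm A (y k - y 0) := by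
    rw [hA, kron_quad, Finset.mul_sum]
    refine Finset.sum_le_sum fun j _ => ?_
    have h1 : T j = (fun _ : Fin N => (1 : ℝ)) ⬝ᵥ (PA *ᵥ fun i => (y k - y 0) (i, j)) := by
      simp only [hT, hA, kron_apply, dotProduct, one_mul]
    rw [h1]
    exact (cs_psd hPA _ _).trans (mul_le_mul_of_nonneg_right hray (psd_nonneg hPA _))
  have hfin : ((∑ j : Fin m, (max (∑ i, g i (xbar k i) j) 0) ^ 2)
          + ∑ j : Fin p, (∑ i, (B i *ᵥ xbar k i + c i) j) ^ 2)
      ≤ (N * lam1) * quadForm A (y k - y 0) / k ^ 2 := by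
    rw [le_div_iff₀ (by positivity)]
    refine le_trans ?_ hTb
    rw [Fintype.sum_sum_type, add_mul, Finset.sum_mul, Finset.sum_mul]
    refine add_le_add (Finset.sum_le_sum fun j _ => ?_) (Finset.sum_le_sum fun j _ => ?_)
    · have h1 := hgb j
      rw [← mul_pow]
      rcases max_cases (∑ i, g i (xbar k i) j) 0 with ⟨h, h0⟩ | ⟨h, h0⟩ <;> rw [h]
      · have := mul_nonneg h0 hkpos.le
        exact pow_le_pow_left₀ this (by linarith) 2
      · rw [zero_mul]; nlinarith [sq_nonneg (T (Sum.inl j))]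
    · rw [← hhb]; exact le_of_eq (by ring)
  have hz0 : ∀ k, 0 ≤ ((z k - zstar) ⬝ᵥ (z k - zstar)) / ρ := fun k =>
    div_nonneg (Finset.sum_nonneg fun i _ => mul_self_nonneg _) hρ.le
  have htri : √(quadForm A (y k - y 0)) ≤ √(quadForm A (y 0 - ys))
      + √(quadForm A (y 0 - ys) + ((z 0 - zstar) ⬝ᵥ (z 0 - zstar)) / ρ) := by
    have h1 := sqrt_tri hApsd (y k - ys) (y 0 - ys)
    rw [sub_sub_sub_cancel_right] at h1
    refine h1.trans (add_le_add le_rfl (Real.sqrt_le_sqrt ?_))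
    linarith [hfej k, hz0 k]
  calc _ ≤ √((N * lam1) * quadForm A (y k - y 0) / k ^ 2) := Real.sqrt_le_sqrt hfin
    _ = √(N * lam1) / k * √(quadForm A (y k - y 0)) := by
      rw [Real.sqrt_div' _ (by positivity), Real.sqrt_mul hNl, Real.sqrt_sq hkpos.le]; ring
    _ ≤ _ := mul_le_mul_of_nonneg_left htri (by positivity)
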